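/- If a continuous map f : I → I of a compact interval I has a period-m point for some integer m ≥ 3, then f has a period-2 point. -/

import Mathlib

/-- `x` is a periodic point of `f` with least period `m`. -/
def PeriodPt (f : ℝ → ℝ) (m : ℕ) (x : ℝ) : Prop :=
  f^[m] x = x ∧ ∀ i : ℕ, 0 < i → i < m → f^[i] x ≠ x

/-!
Let `P` be a finite invariant set without fixed points, such as a periodic orbit of period at least
two. If `p` is the largest point of `P` that `f` moves up and `q` is the next point of `P`, then
`f q ≤ p < q ≤ f p`, so some `t ∈ [p, q)` satisfies `f t = q`. Hence `f` moves `t` up while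
`f²` moves `t` weakly down and `min P` weakly up, so `f²` has a fixed point in `[min P, t]`. If `f`
has fixed points there, let `z` be the largest one: some `u ∈ (z, t)` satisfies `f u = t`, and `f²`
moves `u` up, so `f²` has a fixed point in `[u, t]`, where `f` has none.
-/

open Function Set

theorem periodPt_iff_minimalPeriod_eq {f : ℝ → ℝ} {m : ℕ} {x : ℝ} (hm : 0 < m) :
    PeriodPt f m x ↔ minimalPeriod f x = m := by
  constructor
  · rintro ⟨hx, hlt⟩
    have hper : IsPeriodicPt f m x := hx
    refine (hper.minimalPeriod_le hm).antisymm (not_lt.1 fun h ↦ ?_)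
    exact hlt _ (hper.minimalPeriod_pos hm) h iterate_minimalPeriod
  · rintro rfl
    exact ⟨iterate_minimalPeriod, fun i hi ↦ not_isPeriodicPt_of_pos_of_lt_minimalPeriod hi.ne'⟩

theorem finite_range_iterate_of_mem_periodicPts {α : Type*} {f : α → α} {x : α}
    (hx : x ∈ periodicPts f) : (range (f^[·] x)).Finite := by
  refine ((finite_Iio (minimalPeriod f x)).image (f^[·] x)).subset ?_
  rintro _ ⟨n, rfl⟩
  exact ⟨n % minimalPeriod f x, Nat.mod_lt _ (minimalPeriod_pos_of_mem_periodicPts hx),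
    iterate_mod_minimalPeriod_eq⟩

theorem exists_lt_map_le_le_map_of_finite {α : Type*} [LinearOrder α] {f : α → α} {P : Set α}
    (hfin : P.Finite) (hne : P.Nonempty) (hmaps : MapsTo f P P)
    (hfix : ∀ y ∈ P, ¬IsFixedPt f y) :
    ∃ p ∈ P, ∃ q ∈ P, p < q ∧ f q ≤ p ∧ q ≤ f p := by
  obtain ⟨l, hlP, hl⟩ := P.exists_min_image id hfin hne
  have hl_up : l < f l := (hl _ (hmaps hlP)).lt_of_ne' (hfix l hlP)
  obtain ⟨p, ⟨hpP, hp_up⟩, hp_max⟩ :=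
    {y ∈ P | y < f y}.exists_max_image id (hfin.sep _) ⟨l, hlP, hl_up⟩
  obtain ⟨q, ⟨hqP, hpq⟩, hq_min⟩ :=
    {y ∈ P | p < y}.exists_min_image id (hfin.sep _) ⟨f p, hmaps hpP, hp_up⟩
  have hq_down : f q < q :=
    (not_lt.1 fun hq_up ↦ (hp_max q ⟨hqP, hq_up⟩).not_gt hpq).lt_of_ne (hfix q hqP)
  exact ⟨p, hpP, q, hqP, hpq, not_lt.1 fun h ↦ (hq_min _ ⟨hmaps hqP, h⟩).not_gt hq_down,
    hq_min _ ⟨hmaps hpP, hp_up⟩⟩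

section Interval

variable {α : Type*} [ConditionallyCompleteLinearOrder α] [DenselyOrdered α]
  [TopologicalSpace α] [OrderTopology α] {f : α → α} {s : Set α}

theorem exists_le_map_map_forall_not_isFixedPt {c t : α} (hf : ContinuousOn f (Icc c t))
    (hct : c ≤ t) (hc : c ≤ f (f c)) (ht : t < f t) :
    ∃ u ∈ Icc c t, u ≤ f (f u) ∧ ∀ y ∈ Icc u t, ¬IsFixedPt f y := by
  let F : Set α := {z ∈ Icc c t | f z = z}
  rcases F.eq_empty_or_nonempty with hF | hF
  · exact ⟨c, left_mem_Icc.2 hct, hc, fun y hy hfy ↦ hF.le ⟨hy, hfy⟩⟩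
  have hF_compact : IsCompact F :=
    isCompact_Icc.of_isClosed_subset (isClosed_Icc.isClosed_eq hf continuousOn_id) (sep_subset _ _)
  obtain ⟨z, ⟨hz, hfz⟩, hz_max⟩ := hF_compact.exists_isGreatest hF
  obtain ⟨u, hu, hfu⟩ : t ∈ f '' Icc z t :=
    intermediate_value_Icc hz.2 (hf.mono (Icc_subset_Icc_left hz.1)) ⟨hfz.trans_le hz.2, ht.le⟩
  have hzu : z < u := hu.1.lt_of_ne <| by
    rintro rfl
    exact ht.ne (by rw [← hfu, hfz, hfz])
  refine ⟨u, ⟨hz.1.trans hu.1, hu.2⟩, ?_, fun y hy hfy ↦ ?_⟩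
  · rw [hfu]
    exact hu.2.trans ht.le
  · exact (hz_max ⟨⟨(hz.1.trans hu.1).trans hy.1, hy.2⟩, hfy⟩).not_gt (hzu.trans_le hy.1)

theorem exists_mem_Icc_minimalPeriod_eq_two {c t : α} (hf : ContinuousOn f (Icc c t))
    (hff : ContinuousOn (f ∘ f) (Icc c t)) (hct : c ≤ t) (hc : c ≤ f (f c)) (ht : t < f t)
    (hfft : f (f t) ≤ t) :
    ∃ y ∈ Icc c t, minimalPeriod f y = 2 := by
  obtain ⟨u, hu, hu_le, hu_fix⟩ := exists_le_map_map_forall_not_isFixedPt hf hct hc ht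
  have hsub : Icc u t ⊆ Icc c t := Icc_subset_Icc_left hu.1
  obtain ⟨y, hy, hfy⟩ := exists_mem_Icc_isFixedPt (hff.mono hsub) hu.2 hu_le hfft
  exact ⟨y, hsub hy, minimalPeriod_eq_prime hfy (hu_fix y hy)⟩

theorem exists_minimalPeriod_eq_two_of_finite_invariant [OrdConnected s] (hf : ContinuousOn f s)
    (hmaps : MapsTo f s s) {P : Set α} (hPs : P ⊆ s) (hfin : P.Finite) (hne : P.Nonempty)
    (hP : MapsTo f P P) (hfix : ∀ y ∈ P, ¬IsFixedPt f y) :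
    ∃ y ∈ s, minimalPeriod f y = 2 := by
  obtain ⟨p, hpP, q, hqP, hpq, hqp, hqfp⟩ := exists_lt_map_le_le_map_of_finite hfin hne hP hfix
  have hsub : Icc p q ⊆ s := s.Icc_subset (hPs hpP) (hPs hqP)
  have hq_down : f q < q := hqp.trans_lt hpq
  obtain ⟨t, ht, hft⟩ : q ∈ f '' Icc p q :=
    intermediate_value_Icc' hpq.le (hf.mono hsub) ⟨hq_down.le, hqfp⟩
  have htq : t < q := ht.2.lt_of_ne <| by
    rintro rfl
    exact hq_down.ne hft
  obtain ⟨c, hcP, hc_min⟩ := P.exists_min_image id hfin hne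
  have hsub' : Icc c t ⊆ s := s.Icc_subset (hPs hcP) (hsub ht)
  obtain ⟨y, hy, hy_two⟩ := exists_mem_Icc_minimalPeriod_eq_two (hf.mono hsub')
    ((hf.comp hf hmaps).mono hsub') ((hc_min p hpP).trans ht.1) (hc_min _ (hP (hP hcP)))
    (htq.trans_eq hft.symm) (by rw [hft]; exact hqp.trans ht.1)
  exact ⟨y, hsub' hy, hy_two⟩

theorem period_ge_three_implies_period_two_general [OrdConnected s] (hf : ContinuousOn f s)
    (hmaps : MapsTo f s s) {x : α} (hx : x ∈ s) (hper : 1 < minimalPeriod f x) :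
    ∃ y ∈ s, minimalPeriod f y = 2 := by
  have hx_per : x ∈ periodicPts f :=
    minimalPeriod_pos_iff_mem_periodicPts.1 (zero_lt_one.trans hper)
  refine exists_minimalPeriod_eq_two_of_finite_invariant hf hmaps (P := range (f^[·] x)) ?_
    (finite_range_iterate_of_mem_periodicPts hx_per) (range_nonempty _) ?_ ?_
  · rintro _ ⟨n, rfl⟩
    exact hmaps.iterate n hx
  · rintro _ ⟨n, rfl⟩
    exact ⟨n + 1, iterate_succ_apply' f n x⟩
  · rintro _ ⟨n, rfl⟩ hfix
    rw [← minimalPeriod_eq_one_iff_isFixedPt, minimalPeriod_apply_iterate hx_per] at hfix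
    exact hper.ne' hfix

end Interval

theorem period_ge_three_implies_period_two (a b : ℝ) (hab : a ≤ b) (f : ℝ → ℝ)
    (hcont : ContinuousOn f (Set.Icc a b))
    (hmaps : Set.MapsTo f (Set.Icc a b) (Set.Icc a b))
    (m : ℕ) (hm : 3 ≤ m) (x : ℝ) (hx : x ∈ Set.Icc a b) (hper : PeriodPt f m x) :
    ∃ y ∈ Set.Icc a b, PeriodPt f 2 y := by
  rw [periodPt_iff_minimalPeriod_eq (by lia)] at hper
  simpa only [periodPt_iff_minimalPeriod_eq two_pos] using
    period_ge_three_implies_period_two_general hcont hmaps hx (by lia)
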